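/- arXiv:1012.1389 — 2 statements merged into one kernel-verified Lean document; each statement's English description precedes it below -/
import Mathlib

section
/- Let A be a Banach algebra with a bounded approximate identity. If A ⊗̂ A^{op} is amenable, then A is amenable. -/
open Filter Topology MulOpposite

/-- A Banach `A`-bimodule structure on the Banach space `X`:
`L a x = a • x` (left action), `R a x = x • a` (right action),
given as continuous bilinear maps. -/
structure BanachBimodule (A X : Type*) [NonUnitalNormedRing A] [NormedSpace ℂ A]
    [NormedAddCommGroup X] [NormedSpace ℂ X] where
  L : A →L[ℂ] X →L[ℂ] X
  R : A →L[ℂ] X →L[ℂ] X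
  L_mul : ∀ a b : A, L (a * b) = (L a).comp (L b)
  R_mul : ∀ a b : A, R (a * b) = (R b).comp (R a)
  LR_comm : ∀ (a b : A) (x : X), R b (L a x) = L a (R b x)

/-- `D : A → X*` is a derivation into the dual Banach bimodule of `X`, written
pointwise: `D(ab) = a·D(b) + D(a)·b` where `(a·f)(x) = f(x·a)`, `(f·a)(x) = f(a·x)`. -/
def IsDualDerivation {A X : Type*} [NonUnitalNormedRing A] [NormedSpace ℂ A]
    [NormedAddCommGroup X] [NormedSpace ℂ X] (σ : BanachBimodule A X)
    (D : A →L[ℂ] (X →L[ℂ] ℂ)) : Prop :=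
  ∀ (a b : A) (x : X), D (a * b) x = D b (σ.R a x) + D a (σ.L b x)

/-- `D` is inner: `D a = a·f − f·a` for some `f ∈ X*`. -/
def IsInnerDualDerivation {A X : Type*} [NonUnitalNormedRing A] [NormedSpace ℂ A]
    [NormedAddCommGroup X] [NormedSpace ℂ X] (σ : BanachBimodule A X)
    (D : A →L[ℂ] (X →L[ℂ] ℂ)) : Prop :=
  ∃ f : X →L[ℂ] ℂ, ∀ (a : A) (x : X), D a x = f (σ.R a x) - f (σ.L a x)

/-- A Banach algebra is amenable if every continuous derivation into every dual
Banach bimodule is inner. -/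
def Amenable (A : Type*) [NonUnitalNormedRing A] [NormedSpace ℂ A] : Prop :=
  ∀ (X : Type) (_ : NormedAddCommGroup X) (_ : NormedSpace ℂ X) (_ : CompleteSpace X)
    (σ : BanachBimodule A X) (D : A →L[ℂ] (X →L[ℂ] ℂ)),
    IsDualDerivation σ D → IsInnerDualDerivation σ D

/-- Weak amenability: every continuous derivation `D : A → A*` into the dual
bimodule (`(a·f)(x) = f(xa)`, `(f·a)(x) = f(ax)`) is inner. -/
def WeaklyAmenable (A : Type*) [NonUnitalNormedRing A] [NormedSpace ℂ A] : Prop :=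
  ∀ D : A →L[ℂ] (A →L[ℂ] ℂ),
    (∀ a b x : A, D (a * b) x = D b (x * a) + D a (b * x)) →
    ∃ f : A →L[ℂ] ℂ, ∀ a x : A, D a x = f (x * a) - f (a * x)

/-- A bounded net in a normed space. -/
structure BddNet (X : Type*) [Norm X] where
  ι : Type
  [dir : SemilatticeSup ι]
  [ne : Nonempty ι]
  z : ι → X
  C : ℝ
  bdd : ∀ i, ‖z i‖ ≤ C

/-- The `atTop` filter of the (directed) index of a bounded net. -/
def BddNet.filter {X : Type*} [Norm X] (S : BddNet X) : Filter S.ι :=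
  letI := S.dir; Filter.atTop

/-- The bounded net `S` is a two-sided bounded approximate identity for `A`. -/
def IsBAI {A : Type*} [NonUnitalNormedRing A] (S : BddNet A) : Prop :=
  ∀ a : A, Tendsto (fun i => a * S.z i) S.filter (nhds a) ∧
           Tendsto (fun i => S.z i * a) S.filter (nhds a)

/-- `A` has a (two-sided) bounded approximate identity. -/
def HasBAI (A : Type*) [NonUnitalNormedRing A] : Prop := ∃ S : BddNet A, IsBAI S

/-- `T`, together with the continuous bilinear map `ι`, is (a realization of) the
projective tensor product `A ⊗̂ B` of the Banach algebras `A` and `B`: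
`ι` is multiplicative ((a⊗b)(c⊗d) = ac⊗bd), satisfies the cross-norm estimate,
has dense linear span, and has the universal (norm-decreasing lifting) property
of the projective tensor norm. -/
structure IsProjTensorProduct (A B T : Type*)
    [NonUnitalNormedRing A] [NormedSpace ℂ A] [NonUnitalNormedRing B] [NormedSpace ℂ B]
    [NonUnitalNormedRing T] [NormedSpace ℂ T] [CompleteSpace T] where
  ι : A →L[ℂ] B →L[ℂ] T
  norm_ι : ∀ a b, ‖ι a b‖ ≤ ‖a‖ * ‖b‖
  ι_mul : ∀ (a c : A) (b d : B), ι a b * ι c d = ι (a * c) (b * d)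
  dense_span : Dense (Submodule.span ℂ (Set.range fun p : A × B => ι p.1 p.2) : Set T)
  lift : ∀ (E : Type) (_ : NormedAddCommGroup E) (_ : NormedSpace ℂ E) (_ : CompleteSpace E)
    (φ : A →L[ℂ] B →L[ℂ] E), ∃ Φ : T →L[ℂ] E, (∀ a b, Φ (ι a b) = φ a b) ∧ ‖Φ‖ ≤ ‖φ‖


/-!
Let `D : A → X*` be a derivation. For an `A`-bimodule `Y`, on which `A ⊗̂ Aᵒᵖ` acts by
`(c ⊗ d)·y = c·y·d`, the map `c ⊗ d ↦ (y ↦ (c·y)·D(d))` extends to a derivation of `A ⊗̂ Aᵒᵖ` into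
`Hom(Y, X*)`. With `Y = A`, amenability of `A ⊗̂ Aᵒᵖ` yields `Q : A → X*` such that
`(ca)·D(d) = c·Q(a)·d − Q(cad)`. Letting `a` run through the approximate identity gives
`c·D(d) = c·f·d − Q(cd)` with `f = lim Q(a)`, and expanding `D(db)` by this formula and by the
derivation rule shows that `D` agrees with the inner derivation of `−f` on `A·X·A`. Each of the two
outer copies of `A` is then removed with the approximate identity: a derivation vanishing on `A·S`
or on `S·A` is inner on `S`.
-/

section BimodulesAndDerivations

variable {A X Y : Type*} [NonUnitalNormedRing A] [NormedSpace ℂ A]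
  [NormedAddCommGroup X] [NormedSpace ℂ X] [NormedAddCommGroup Y] [NormedSpace ℂ Y]

namespace BanachBimodule

lemma L_mul_apply (σ : BanachBimodule A X) (a b : A) (x : X) :
    σ.L (a * b) x = σ.L a (σ.L b x) :=
  congr($(σ.L_mul a b) x)

lemma R_mul_apply (σ : BanachBimodule A X) (a b : A) (x : X) :
    σ.R (a * b) x = σ.R b (σ.R a x) :=
  congr($(σ.R_mul a b) x)

/-- The dual bimodule `X*`, with `(a·f)(x) = f(x·a)` and `(f·a)(x) = f(a·x)`. -/
noncomputable def dual (σ : BanachBimodule A X) : BanachBimodule A (X →L[ℂ] ℂ) where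
  L := (ContinuousLinearMap.compL ℂ X X ℂ).flip.comp σ.R
  R := (ContinuousLinearMap.compL ℂ X X ℂ).flip.comp σ.L
  L_mul a b := by
    ext f x
    exact congrArg f (σ.R_mul_apply a b x)
  R_mul a b := by
    ext f x
    exact congrArg f (σ.L_mul_apply a b x)
  LR_comm a b f := by
    ext x
    exact congrArg f (σ.LR_comm b a x)

/-- The bimodule `Hom(Y, X*)` of a left module `Y`, with action `Λ`, and a right module `X`, with
action `Θ`: `(a·v)(y)(x) = v(y)(x·a)` and `(v·a)(y)(x) = v(a·y)(x)`. -/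
noncomputable def homDual (Λ : A →L[ℂ] Y →L[ℂ] Y) (Θ : A →L[ℂ] X →L[ℂ] X)
    (hΛ : ∀ a b, Λ (a * b) = (Λ a).comp (Λ b)) (hΘ : ∀ a b, Θ (a * b) = (Θ b).comp (Θ a)) :
    BanachBimodule A (Y →L[ℂ] X →L[ℂ] ℂ) where
  L := (ContinuousLinearMap.compL ℂ Y (X →L[ℂ] ℂ) (X →L[ℂ] ℂ)).comp
    ((ContinuousLinearMap.compL ℂ X X ℂ).flip.comp Θ)
  R := (ContinuousLinearMap.compL ℂ Y Y (X →L[ℂ] ℂ)).flip.comp Λ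
  L_mul a b := by
    ext v y x
    exact congrArg (v y) congr($(hΘ a b) x)
  R_mul a b := by
    ext v y x
    exact congr(v ($(hΛ a b) y) x)
  LR_comm _ _ _ := rfl

/-- The inner derivation `a ↦ a·f − f·a` into `X*` given by `f ∈ X*`. -/
noncomputable def ad (σ : BanachBimodule A X) (f : X →L[ℂ] ℂ) : A →L[ℂ] X →L[ℂ] ℂ :=
  (ContinuousLinearMap.compL ℂ X X ℂ f).comp (σ.R - σ.L)

@[simp]
lemma ad_apply (σ : BanachBimodule A X) (f : X →L[ℂ] ℂ) (a : A) (x : X) :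
    σ.ad f a x = f (σ.R a x) - f (σ.L a x) :=
  map_sub f _ _

end BanachBimodule

/-- `D : A → X` is a derivation into the bimodule `X` itself: `D(ab) = a·D(b) + D(a)·b`. -/
def IsDerivation (σ : BanachBimodule A X) (D : A →L[ℂ] X) : Prop :=
  ∀ a b, D (a * b) = σ.L a (D b) + σ.R b (D a)

/-- `D : A → X*` agrees on the subset `S` of `X` with an inner derivation. -/
def IsInnerOn (σ : BanachBimodule A X) (D : A →L[ℂ] X →L[ℂ] ℂ) (S : Set X) : Prop :=
  ∃ f : X →L[ℂ] ℂ, ∀ a, ∀ x ∈ S, D a x = σ.ad f a x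

lemma isInnerOn_univ_iff {σ : BanachBimodule A X} {D : A →L[ℂ] X →L[ℂ] ℂ} :
    IsInnerOn σ D Set.univ ↔ IsInnerDualDerivation σ D := by
  simp [IsInnerOn, IsInnerDualDerivation]

lemma IsInnerOn.of_sub_ad {σ : BanachBimodule A X} {D : A →L[ℂ] X →L[ℂ] ℂ} {f : X →L[ℂ] ℂ}
    {S : Set X} (h : IsInnerOn σ (D - σ.ad f) S) : IsInnerOn σ D S := by
  obtain ⟨g, hg⟩ := h
  refine ⟨g + f, fun a x hx => ?_⟩
  have hgx := hg a x hx
  simp only [sub_apply, add_apply,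
    BanachBimodule.ad_apply] at hgx ⊢
  linear_combination hgx

lemma IsDualDerivation.sub_ad {σ : BanachBimodule A X} {D : A →L[ℂ] X →L[ℂ] ℂ}
    (hD : IsDualDerivation σ D) (f : X →L[ℂ] ℂ) : IsDualDerivation σ (D - σ.ad f) := by
  intro a b x
  simp only [sub_apply, BanachBimodule.ad_apply, hD a b x,
    σ.L_mul_apply, σ.R_mul_apply, σ.LR_comm]
  ring

lemma isInnerOn_image2_of_apply_R_eq {σ : BanachBimodule A X}
    {D : A →L[ℂ] X →L[ℂ] ℂ} (hD : IsDualDerivation σ D) {f : X →L[ℂ] ℂ}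
    {Q : A →L[ℂ] X →L[ℂ] ℂ}
    (h : ∀ (c d : A) (x : X), D d (σ.R c x) = f (σ.L d (σ.R c x)) - Q (c * d) x) :
    IsInnerOn σ D (Set.image2 (fun a x => σ.L a x) Set.univ
      (Set.image2 (fun a x => σ.R a x) Set.univ Set.univ)) := by
  refine ⟨-f, ?_⟩
  rintro d _ ⟨b, -, _, ⟨c, -, x, -, rfl⟩, rfl⟩
  have hprod := h c (d * b) x
  have hb := h (c * d) b x
  rw [hD, σ.L_mul_apply, ← mul_assoc] at hprod
  rw [σ.R_mul_apply] at hb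
  simp only [BanachBimodule.ad_apply, neg_apply, σ.LR_comm]
  linear_combination hprod - hb

end BimodulesAndDerivations

section MixedIdentity

variable {A : Type*} [NonUnitalNormedRing A] [NormedSpace ℂ A] [IsScalarTower ℂ A A]
  [SMulCommClass ℂ A A]

/-- A mixed identity of `A`: an element `m` of `A**` acting as an identity on each side, in the
sense of the Arens products. It replaces limits along a bounded approximate identity. -/
structure IsMixedIdentity (m : (A →L[ℂ] ℂ) →L[ℂ] ℂ) : Prop where
  apply_mul_left : ∀ (F : A →L[ℂ] ℂ) (a : A), m (F.comp (ContinuousLinearMap.mul ℂ A a)) = F a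
  apply_mul_right :
    ∀ (F : A →L[ℂ] ℂ) (a : A), m (F.comp ((ContinuousLinearMap.mul ℂ A).flip a)) = F a

lemma exists_tendsto_apply_of_norm_le {X I : Type*} [NormedAddCommGroup X] [NormedSpace ℂ X]
    (U : Ultrafilter I) (φ : I → X →L[ℂ] ℂ) (C : ℝ) (hφ : ∀ i, ‖φ i‖ ≤ C) :
    ∃ g : X →L[ℂ] ℂ, ∀ x, Tendsto (fun i => φ i x) U (𝓝 (g x)) := by
  let ψ : I → WeakDual ℂ X := fun i => StrongDual.toWeakDual (φ i)
  have hψ : ∀ i, ψ i ∈ WeakDual.toStrongDual ⁻¹' Metric.closedBall (0 : X →L[ℂ] ℂ) C :=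
    fun i => mem_closedBall_zero_iff.2 (hφ i)
  obtain ⟨g, -, hg⟩ := (WeakDual.isCompact_closedBall (0 : X →L[ℂ] ℂ) C).ultrafilter_le_nhds
    (U.map ψ) (le_principal_iff.2 (mem_map.2 (univ_mem' hψ)))
  exact ⟨WeakDual.toStrongDual g, fun x => ((WeakDual.eval_continuous x).tendsto g).comp hg⟩

theorem HasBAI.exists_isMixedIdentity (hA : HasBAI A) :
    ∃ m : (A →L[ℂ] ℂ) →L[ℂ] ℂ, IsMixedIdentity m := by
  obtain ⟨S, hS⟩ := hA
  have : S.filter.NeBot := by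
    let _ := S.dir
    have := S.ne
    exact atTop_neBot
  let U := Ultrafilter.of S.filter
  have hU : (U : Filter S.ι) ≤ S.filter := Ultrafilter.of_le _
  obtain ⟨m, hm⟩ := exists_tendsto_apply_of_norm_le U
    (fun i => NormedSpace.inclusionInDoubleDual ℂ A (S.z i)) S.C
    fun i => (NormedSpace.double_dual_bound ℂ A _).trans (S.bdd i)
  exact ⟨m,
    fun F a => tendsto_nhds_unique (hm _) ((F.continuous.tendsto a).comp ((hS a).1.mono_left hU)),
    fun F a => tendsto_nhds_unique (hm _) ((F.continuous.tendsto a).comp ((hS a).2.mono_left hU))⟩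

variable {X : Type*} [NormedAddCommGroup X] [NormedSpace ℂ X] {m : (A →L[ℂ] ℂ) →L[ℂ] ℂ}
  {σ : BanachBimodule A X} {D : A →L[ℂ] X →L[ℂ] ℂ} {S : Set X}

lemma IsMixedIdentity.isInnerOn_of_forall_L_eq_zero (hm : IsMixedIdentity m)
    (hD : IsDualDerivation σ D) (h0 : ∀ a b, ∀ x ∈ S, D a (σ.L b x) = 0) : IsInnerOn σ D S := by
  refine ⟨m.comp D.flip, fun a x hx => ?_⟩
  have hR : D.flip (σ.R a x) = (D.flip x).comp (ContinuousLinearMap.mul ℂ A a) := by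
    ext b
    simp [hD a b x, h0 a b x hx]
  have hL : D.flip (σ.L a x) = 0 := by
    ext b
    exact h0 b a x hx
  simp [hR, hL, hm.apply_mul_left]

lemma IsMixedIdentity.isInnerOn_of_forall_R_eq_zero (hm : IsMixedIdentity m)
    (hD : IsDualDerivation σ D) (h0 : ∀ a b, ∀ x ∈ S, D a (σ.R b x) = 0) : IsInnerOn σ D S := by
  refine ⟨-m.comp D.flip, fun a x hx => ?_⟩
  have hL : D.flip (σ.L a x) = (D.flip x).comp ((ContinuousLinearMap.mul ℂ A).flip a) := by
    ext b
    simp [hD b a x, h0 a b x hx]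
  have hR : D.flip (σ.R a x) = 0 := by
    ext b
    exact h0 b a x hx
  simp [hR, hL, hm.apply_mul_right]

lemma IsMixedIdentity.isInnerOn_of_isInnerOn_L (hm : IsMixedIdentity m)
    (hD : IsDualDerivation σ D)
    (h : IsInnerOn σ D (Set.image2 (fun a x => σ.L a x) Set.univ S)) : IsInnerOn σ D S := by
  obtain ⟨f, hf⟩ := h
  refine .of_sub_ad (hm.isInnerOn_of_forall_L_eq_zero (hD.sub_ad f) fun a b x hx => ?_)
  exact sub_eq_zero.2 (hf a _ (Set.mem_image2_of_mem (Set.mem_univ b) hx))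

lemma IsMixedIdentity.isInnerOn_of_isInnerOn_R (hm : IsMixedIdentity m)
    (hD : IsDualDerivation σ D)
    (h : IsInnerOn σ D (Set.image2 (fun a x => σ.R a x) Set.univ S)) : IsInnerOn σ D S := by
  obtain ⟨f, hf⟩ := h
  refine .of_sub_ad (hm.isInnerOn_of_forall_R_eq_zero (hD.sub_ad f) fun a b x hx => ?_)
  exact sub_eq_zero.2 (hf a _ (Set.mem_image2_of_mem (Set.mem_univ b) hx))

lemma IsMixedIdentity.apply_R_eq (hm : IsMixedIdentity m) {Q : A →L[ℂ] X →L[ℂ] ℂ}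
    (hQ : ∀ (a c d : A) (x : X),
      D d (σ.R a (σ.R c x)) = Q a (σ.L d (σ.R c x)) - Q (c * a * d) x) (c d : A) (x : X) :
    D d (σ.R c x) = m (Q.flip (σ.L d (σ.R c x))) - Q (c * d) x := by
  have hcomp : ((D d).comp (σ.R.flip x)).comp (ContinuousLinearMap.mul ℂ A c) =
      Q.flip (σ.L d (σ.R c x)) - ((Q.flip x).comp ((ContinuousLinearMap.mul ℂ A).flip d)).comp
        (ContinuousLinearMap.mul ℂ A c) := by
    ext a
    simpa [σ.R_mul_apply] using hQ a c d x
  have hm' := congrArg m hcomp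
  rw [map_sub, hm.apply_mul_left, hm.apply_mul_left] at hm'
  exact hm'

end MixedIdentity

section Bidual

variable {T : Type*} [NonUnitalNormedRing T] [NormedSpace ℂ T]

theorem Amenable.exists_bidual_of_isDerivation {V : Type} [NormedAddCommGroup V] [NormedSpace ℂ V]
    (hT : Amenable T) {τ : BanachBimodule T V} {Δ : T →L[ℂ] V} (hΔ : IsDerivation τ Δ) :
    ∃ f : (V →L[ℂ] ℂ) →L[ℂ] ℂ, ∀ t w, w (Δ t) = τ.dual.ad f t w := by
  let E : T →L[ℂ] (V →L[ℂ] ℂ) →L[ℂ] ℂ := (NormedSpace.inclusionInDoubleDual ℂ V).comp Δ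
  have hE : IsDualDerivation τ.dual E := by
    intro s t w
    exact (congrArg w (hΔ s t)).trans (map_add w _ _)
  obtain ⟨f, hf⟩ := hT _ _ _ inferInstance τ.dual E hE
  exact ⟨f, fun t w => (hf t w).trans (τ.dual.ad_apply f t w).symm⟩

set_option maxSynthPendingDepth 4 in
theorem Amenable.exists_of_isDerivation_homDual {X Y : Type} [NormedAddCommGroup X]
    [NormedSpace ℂ X] [NormedAddCommGroup Y] [NormedSpace ℂ Y] (hT : Amenable T)
    {Λ : T →L[ℂ] Y →L[ℂ] Y} {Θ : T →L[ℂ] X →L[ℂ] X}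
    {hΛ : ∀ s t, Λ (s * t) = (Λ s).comp (Λ t)} {hΘ : ∀ s t, Θ (s * t) = (Θ t).comp (Θ s)}
    {Δ : T →L[ℂ] Y →L[ℂ] X →L[ℂ] ℂ} (hΔ : IsDerivation (.homDual Λ Θ hΛ hΘ) Δ) :
    ∃ φ : Y →L[ℂ] X →L[ℂ] ℂ, ∀ t y x, Δ t y x = φ y (Θ t x) - φ (Λ t y) x := by
  obtain ⟨f, hf⟩ := hT.exists_bidual_of_isDerivation hΔ
  let eval : Y →L[ℂ] X →L[ℂ] (Y →L[ℂ] X →L[ℂ] ℂ) →L[ℂ] ℂ :=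
    (ContinuousLinearMap.compL ℂ (Y →L[ℂ] X →L[ℂ] ℂ) (X →L[ℂ] ℂ) ℂ).flip.bilinearComp
      (ContinuousLinearMap.apply ℂ (X →L[ℂ] ℂ))
      (NormedSpace.inclusionInDoubleDual ℂ X)
  let φ : Y →L[ℂ] X →L[ℂ] ℂ :=
    (ContinuousLinearMap.compL ℂ X ((Y →L[ℂ] X →L[ℂ] ℂ) →L[ℂ] ℂ) ℂ f).comp eval
  refine ⟨φ, fun t y x => ?_⟩
  exact (hf t (eval y x)).trans (BanachBimodule.ad_apply _ f t (eval y x))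

end Bidual

namespace IsProjTensorProduct

variable {A B T : Type*} [NonUnitalNormedRing A] [NormedSpace ℂ A]
  [NonUnitalNormedRing B] [NormedSpace ℂ B] [NonUnitalNormedRing T] [NormedSpace ℂ T]
  [CompleteSpace T]

lemma hom_ext {V : Type*} [NormedAddCommGroup V] [NormedSpace ℂ V]
    (P : IsProjTensorProduct A B T) {F G : T →L[ℂ] V}
    (h : ∀ a b, F (P.ι a b) = G (P.ι a b)) : F = G := by
  refine ContinuousLinearMap.ext_on P.dense_span ?_
  rintro _ ⟨p, rfl⟩
  exact h p.1 p.2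

variable [IsScalarTower ℂ T T] [SMulCommClass ℂ T T]

lemma map_mul_eq_of_tensor {V : Type*} [NormedAddCommGroup V] [NormedSpace ℂ V]
    (P : IsProjTensorProduct A B T) {F : T →L[ℂ] V} {K : T →L[ℂ] T →L[ℂ] V}
    (h : ∀ a c b d, F (P.ι (a * c) (b * d)) = K (P.ι a b) (P.ι c d)) (s t : T) :
    F (s * t) = K s t := by
  have hK : (ContinuousLinearMap.compL ℂ T T V F).comp (ContinuousLinearMap.mul ℂ T) = K :=
    P.hom_ext fun a b => P.hom_ext fun c d =>
      (congrArg F (P.ι_mul a c b d)).trans (h a c b d)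
  exact congr($hK s t)

variable {Y : Type} [NormedAddCommGroup Y] [NormedSpace ℂ Y] [CompleteSpace Y]

theorem exists_leftAction (P : IsProjTensorProduct A Aᵐᵒᵖ T) (σ : BanachBimodule A Y) :
    ∃ Λ : T →L[ℂ] Y →L[ℂ] Y, (∀ s t, Λ (s * t) = (Λ s).comp (Λ t)) ∧
      ∀ a b, Λ (P.ι a b) = (σ.R b.unop).comp (σ.L a) := by
  let unop : Aᵐᵒᵖ →L[ℂ] A := (opContinuousLinearEquiv ℂ (M := A)).symm
  let compL := ContinuousLinearMap.compL ℂ Y Y Y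
  obtain ⟨Λ, hΛ, -⟩ := P.lift (Y →L[ℂ] Y) _ _ inferInstance
    (compL.flip.bilinearComp σ.L (σ.R.comp unop))
  refine ⟨Λ, P.map_mul_eq_of_tensor (K := compL.bilinearComp Λ Λ) fun a c b d => ?_, hΛ⟩
  ext y
  simp [compL, unop, hΛ, σ.L_mul_apply, σ.R_mul_apply, σ.LR_comm]

theorem exists_rightAction (P : IsProjTensorProduct A Aᵐᵒᵖ T) (σ : BanachBimodule A Y) :
    ∃ Θ : T →L[ℂ] Y →L[ℂ] Y, (∀ s t, Θ (s * t) = (Θ t).comp (Θ s)) ∧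
      ∀ a b, Θ (P.ι a b) = (σ.L b.unop).comp (σ.R a) := by
  let unop : Aᵐᵒᵖ →L[ℂ] A := (opContinuousLinearEquiv ℂ (M := A)).symm
  let compL := ContinuousLinearMap.compL ℂ Y Y Y
  obtain ⟨Θ, hΘ, -⟩ := P.lift (Y →L[ℂ] Y) _ _ inferInstance
    (compL.flip.bilinearComp σ.R (σ.L.comp unop))
  refine ⟨Θ, P.map_mul_eq_of_tensor (K := compL.flip.bilinearComp Θ Θ) fun a c b d => ?_, hΘ⟩
  ext y
  simp [compL, unop, hΘ, σ.L_mul_apply, σ.R_mul_apply, σ.LR_comm]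

theorem exists_isDerivation (P : IsProjTensorProduct A B T) (τ : BanachBimodule T Y)
    (δ : A →L[ℂ] B →L[ℂ] Y)
    (hδ : ∀ a c b d, δ (a * c) (b * d) = τ.L (P.ι a b) (δ c d) + τ.R (P.ι c d) (δ a b)) :
    ∃ Δ : T →L[ℂ] Y, IsDerivation τ Δ ∧ ∀ a b, Δ (P.ι a b) = δ a b := by
  obtain ⟨Δ, hΔ, -⟩ := P.lift Y _ _ inferInstance δ
  let K : T →L[ℂ] T →L[ℂ] Y :=
    (ContinuousLinearMap.compL ℂ T Y Y).flip Δ ∘L τ.L +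
      ((ContinuousLinearMap.compL ℂ T Y Y).flip Δ ∘L τ.R).flip
  refine ⟨Δ, P.map_mul_eq_of_tensor (K := K) fun a c b d => ?_, hΔ⟩
  simp [K, hΔ, hδ]

end IsProjTensorProduct

section TensorDerivation

variable {A X Y : Type*} [NonUnitalNormedRing A] [NormedSpace ℂ A]
  [NormedAddCommGroup X] [NormedSpace ℂ X] [NormedAddCommGroup Y] [NormedSpace ℂ Y]

/-- `ε : Y → B(X)` is a map of `A`-bimodules from `Y` into the left `A`-module endomorphisms of `X`,
which carry the actions `(a·e)(x) = e(x·a)` and `(e·a)(x) = e(x)·a`. For `Y = A` acting on itself,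
right multiplication is such a map. -/
structure IsEndomorphismAction (σ : BanachBimodule A X) (υ : BanachBimodule A Y)
    (ε : Y →L[ℂ] X →L[ℂ] X) : Prop where
  apply_L : ∀ y a x, ε y (σ.L a x) = σ.L a (ε y x)
  L_apply : ∀ a y x, ε (υ.L a y) x = ε y (σ.R a x)
  R_apply : ∀ a y x, ε (υ.R a y) x = σ.R a (ε y x)

set_option maxSynthPendingDepth 4 in
/-- The map `c ⊗ d ↦ (y ↦ (c·y)·D(d))` into `Hom(Y, X*)`, where `Y` acts on `X*` through `ε`. It is
a derivation on elementary tensors when `D` is one. -/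
noncomputable def tensorDerivation (σ : BanachBimodule A X) (ε : Y →L[ℂ] X →L[ℂ] X)
    (D : A →L[ℂ] X →L[ℂ] ℂ) : A →L[ℂ] Aᵐᵒᵖ →L[ℂ] Y →L[ℂ] X →L[ℂ] ℂ :=
  let unop : Aᵐᵒᵖ →L[ℂ] A := (opContinuousLinearEquiv ℂ (M := A)).symm
  (ContinuousLinearMap.compL ℂ Y (X →L[ℂ] X) (X →L[ℂ] ℂ)).flip.bilinearComp
    (((ContinuousLinearMap.compL ℂ Y (X →L[ℂ] X) (X →L[ℂ] X)).flip ε).comp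
      ((ContinuousLinearMap.compL ℂ X X X).flip.comp σ.R))
    ((ContinuousLinearMap.compL ℂ X X ℂ).comp (D.comp unop))

lemma tensorDerivation_apply (σ : BanachBimodule A X) (ε : Y →L[ℂ] X →L[ℂ] X)
    (D : A →L[ℂ] X →L[ℂ] ℂ) (c : A) (d : Aᵐᵒᵖ) (y : Y) (x : X) :
    tensorDerivation σ ε D c d y x = D d.unop (ε y (σ.R c x)) :=
  rfl

lemma IsEndomorphismAction.tensorDerivation_mul {σ : BanachBimodule A X} {υ : BanachBimodule A Y}
    {ε : Y →L[ℂ] X →L[ℂ] X} (hε : IsEndomorphismAction σ υ ε) {D : A →L[ℂ] X →L[ℂ] ℂ}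
    (hD : IsDualDerivation σ D) (a c : A) (b d : Aᵐᵒᵖ) (y : Y) (x : X) :
    tensorDerivation σ ε D (a * c) (b * d) y x =
      tensorDerivation σ ε D c d y (σ.L b.unop (σ.R a x)) +
        tensorDerivation σ ε D a b (υ.R d.unop (υ.L c y)) x := by
  simp only [tensorDerivation_apply, unop_mul, hD d.unop b.unop, hε.L_apply, hε.R_apply,
    hε.apply_L, σ.R_mul_apply, σ.LR_comm]
  exact add_comm _ _

theorem IsProjTensorProduct.exists_of_isEndomorphismAction {T : Type*} [NonUnitalNormedRing T]
    [NormedSpace ℂ T] [IsScalarTower ℂ T T] [SMulCommClass ℂ T T] [CompleteSpace T]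
    {X Y : Type} [NormedAddCommGroup X] [NormedSpace ℂ X] [CompleteSpace X]
    [NormedAddCommGroup Y] [NormedSpace ℂ Y] [CompleteSpace Y]
    (P : IsProjTensorProduct A Aᵐᵒᵖ T) (hT : Amenable T) {σ : BanachBimodule A X}
    {υ : BanachBimodule A Y} {ε : Y →L[ℂ] X →L[ℂ] X} (hε : IsEndomorphismAction σ υ ε)
    {D : A →L[ℂ] X →L[ℂ] ℂ} (hD : IsDualDerivation σ D) :
    ∃ φ : Y →L[ℂ] X →L[ℂ] ℂ, ∀ c d y x,
      D d (ε y (σ.R c x)) = φ y (σ.L d (σ.R c x)) - φ (υ.R d (υ.L c y)) x := by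
  obtain ⟨Λ, hΛ, hΛι⟩ := P.exists_leftAction υ
  obtain ⟨Θ, hΘ, hΘι⟩ := P.exists_rightAction σ
  obtain ⟨Δ, hΔ, hΔι⟩ := P.exists_isDerivation (.homDual Λ Θ hΛ hΘ) (tensorDerivation σ ε D) <| by
    intro a c b d
    ext y x
    simpa [BanachBimodule.homDual, hΛι, hΘι] using hε.tensorDerivation_mul hD a c b d y x
  obtain ⟨φ, hφ⟩ := hT.exists_of_isDerivation_homDual hΔ
  refine ⟨φ, fun c d y x => ?_⟩
  simpa [hΛι, hΘι, hΔι, tensorDerivation_apply] using hφ (P.ι c (op d)) y x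

end TensorDerivation

namespace BanachBimodule

variable {A X : Type*} [NonUnitalNormedRing A] [NormedSpace ℂ A]
  [NormedAddCommGroup X] [NormedSpace ℂ X]

/-- The algebra of bounded left `A`-module endomorphisms of `X`. It contains all right
multiplications and stands in for `A` as the coefficient module: `A` itself need not live in the
universe to which `Amenable` and `IsProjTensorProduct.lift` are confined. -/
def leftCommutant (σ : BanachBimodule A X) : Subalgebra ℂ (X →L[ℂ] X) :=
  Subalgebra.centralizer ℂ (Set.range σ.L)

instance [CompleteSpace X] (σ : BanachBimodule A X) : CompleteSpace σ.leftCommutant :=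
  (Set.isClosed_centralizer (Set.range σ.L)).completeSpace_coe

lemma R_mem_leftCommutant (σ : BanachBimodule A X) (a : A) : σ.R a ∈ σ.leftCommutant := by
  rw [leftCommutant, Subalgebra.mem_centralizer_iff]
  rintro _ ⟨b, rfl⟩
  ext x
  exact (σ.LR_comm b a x).symm

/-- Right multiplication `a ↦ (x ↦ x·a)`, with values in the left commutant. -/
noncomputable def toLeftCommutant (σ : BanachBimodule A X) : A →L[ℂ] σ.leftCommutant :=
  σ.R.codRestrict (Subalgebra.toSubmodule σ.leftCommutant) σ.R_mem_leftCommutant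

lemma toLeftCommutant_mul (σ : BanachBimodule A X) (a b : A) :
    σ.toLeftCommutant (a * b) = σ.toLeftCommutant b * σ.toLeftCommutant a :=
  Subtype.ext (σ.R_mul a b)

/-- The left commutant as an `A`-bimodule, with `(a·e)(x) = e(x·a)` and `(e·a)(x) = e(x)·a`. -/
noncomputable def leftCommutantBimodule (σ : BanachBimodule A X) :
    BanachBimodule A σ.leftCommutant where
  L := (ContinuousLinearMap.mul ℂ σ.leftCommutant).flip.comp σ.toLeftCommutant
  R := (ContinuousLinearMap.mul ℂ σ.leftCommutant).comp σ.toLeftCommutant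
  L_mul a b := by
    ext1 e
    exact (congrArg (e * ·) (σ.toLeftCommutant_mul a b)).trans (mul_assoc _ _ _).symm
  R_mul a b := by
    ext1 e
    exact (congrArg (· * e) (σ.toLeftCommutant_mul a b)).trans (mul_assoc _ _ _)
  LR_comm a b e := (mul_assoc (σ.toLeftCommutant b) e (σ.toLeftCommutant a)).symm

lemma leftCommutantBimodule_R_L_toLeftCommutant (σ : BanachBimodule A X) (c a d : A) :
    σ.leftCommutantBimodule.R d (σ.leftCommutantBimodule.L c (σ.toLeftCommutant a)) =
      σ.toLeftCommutant (c * a * d) := by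
  rw [toLeftCommutant_mul, toLeftCommutant_mul]
  rfl

lemma isEndomorphismAction_leftCommutant (σ : BanachBimodule A X) :
    IsEndomorphismAction σ σ.leftCommutantBimodule
      (Subalgebra.toSubmodule σ.leftCommutant).subtypeL where
  apply_L e a x := congr($((Subalgebra.mem_centralizer_iff ℂ).1 e.2 (σ.L a) ⟨a, rfl⟩) x).symm
  L_apply _ _ _ := rfl
  R_apply _ _ _ := rfl

end BanachBimodule

theorem stmt2_general {A T : Type*} [NonUnitalNormedRing A] [NormedSpace ℂ A]
    [IsScalarTower ℂ A A] [SMulCommClass ℂ A A] [NonUnitalNormedRing T] [NormedSpace ℂ T]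
    [IsScalarTower ℂ T T] [SMulCommClass ℂ T T] [CompleteSpace T]
    (P : IsProjTensorProduct A Aᵐᵒᵖ T) (hA : HasBAI A) (hT : Amenable T) : Amenable A := by
  intro X _ _ _ σ D hD
  obtain ⟨m, hm⟩ := hA.exists_isMixedIdentity
  obtain ⟨φ, hφ⟩ := P.exists_of_isEndomorphismAction hT σ.isEndomorphismAction_leftCommutant hD
  let Q : A →L[ℂ] X →L[ℂ] ℂ := φ.comp σ.toLeftCommutant
  have hQ (a c d : A) (x : X) :
      D d (σ.R a (σ.R c x)) = Q a (σ.L d (σ.R c x)) - Q (c * a * d) x := by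
    have hφa := hφ c d (σ.toLeftCommutant a) x
    rw [σ.leftCommutantBimodule_R_L_toLeftCommutant] at hφa
    exact hφa
  have hinner := isInnerOn_image2_of_apply_R_eq (f := m.comp Q.flip) hD (hm.apply_R_eq hQ)
  exact isInnerOn_univ_iff.1
    (hm.isInnerOn_of_isInnerOn_R hD (hm.isInnerOn_of_isInnerOn_L hD hinner))

/-- if `A` has a bounded approximate identity and `A ⊗̂ Aᵒᵖ` is amenable,
then `A` is amenable. -/
theorem stmt2 {A T : Type*} [NonUnitalNormedRing A] [NormedSpace ℂ A] [IsScalarTower ℂ A A] [SMulCommClass ℂ A A] [CompleteSpace A] [NonUnitalNormedRing T] [NormedSpace ℂ T] [IsScalarTower ℂ T T] [SMulCommClass ℂ T T] [CompleteSpace T]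
    (P : IsProjTensorProduct A Aᵐᵒᵖ T)
    (hA : HasBAI A) (hT : Amenable T) : Amenable A :=
  stmt2_general P hA hT
end

section
/- Let A be a Banach algebra with a bounded approximate identity such that A ⊗̂ A is amenable. Then A is amenable. -/
open Filter Topology MulOpposite

/-! A derivation `D : A → X*` and a bimodule map `θ : B → M` give the derivation
`a ⊗ b ↦ D a ⊗ θ b` of `A ⊗̂ B`. If it is inner, implemented by `F`, then evaluating at the
elementary tensors `x ⊗ ψ(u · v)` gives
`D a x * ψ (θ (u b v)) = F (x · a ⊗ ψ(u b · v)) - F (a · x ⊗ ψ(u · b v))`,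
and letting `b` run through an approximate identity of `B` turns the right-hand side into
`f (x · a) - f (a · x)` with `f x = F (x ⊗ ψ(u · v))`. So `D` is inner once `ψ (θ (u v)) = 1`.

The role of `X ⊗̂ M*` is played by the space of operators `M → X`, in which `x ⊗ n` is the rank-one
operator `w ↦ n w • x`. For `B = A` the obvious choice `θ = id` is not available, because `Amenable`
tests only bimodules in `Type` whereas `A` may live in any universe; instead `θ` sends `a` to the
pair of its left and right actions on `X`. If this `θ` vanishes, then `D` kills all products and
hence is zero. -/

open ContinuousLinearMap

section OperatorComposition

variable {𝕜 S T W Y Z : Type*} [NontriviallyNormedField 𝕜]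
  [SeminormedAddCommGroup S] [NormedSpace 𝕜 S] [SeminormedAddCommGroup T] [NormedSpace 𝕜 T]
  [SeminormedAddCommGroup W] [NormedSpace 𝕜 W] [SeminormedAddCommGroup Y] [NormedSpace 𝕜 Y]
  [SeminormedAddCommGroup Z] [NormedSpace 𝕜 Z]

/-- The bilinear map `(s, t) ↦ Φ s ∘ Ψ t`. -/
noncomputable def pointwiseComp (Φ : S →L[𝕜] Y →L[𝕜] Z) (Ψ : T →L[𝕜] W →L[𝕜] Y) :
    S →L[𝕜] T →L[𝕜] W →L[𝕜] Z :=
  (compL 𝕜 W Y Z).bilinearComp Φ Ψ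

@[simp]
theorem pointwiseComp_apply (Φ : S →L[𝕜] Y →L[𝕜] Z) (Ψ : T →L[𝕜] W →L[𝕜] Y) (s : S) (t : T) :
    pointwiseComp Φ Ψ s t = (Φ s).comp (Ψ t) :=
  rfl

/-- The bilinear map sending `(s, t)` to the operator `y ↦ p s ∘ y ∘ q t` on `W →L[𝕜] Y`. -/
noncomputable def sandwich (p : S →L[𝕜] Y →L[𝕜] Y) (q : T →L[𝕜] W →L[𝕜] W) :
    S →L[𝕜] T →L[𝕜] (W →L[𝕜] Y) →L[𝕜] (W →L[𝕜] Y) :=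
  pointwiseComp ((compL 𝕜 W Y Y).comp p) ((compL 𝕜 W W Y).flip.comp q)

@[simp]
theorem sandwich_apply (p : S →L[𝕜] Y →L[𝕜] Y) (q : T →L[𝕜] W →L[𝕜] W) (s : S) (t : T)
    (y : W →L[𝕜] Y) : sandwich p q s t y = (p s).comp (y.comp (q t)) :=
  rfl

end OperatorComposition

section ApproximateUnit

theorem eq_of_forall_map_mul_eq {A Z : Type*} [TopologicalSpace A] [Mul A] [TopologicalSpace Z]
    [T2Space Z] {l : Filter A} (hl : l.IsApproximateUnit) {f g : A → Z} (hf : Continuous f)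
    (hg : Continuous g) {u v : A} (h : ∀ e, f (u * e) = g (e * v)) : f u = g v := by
  have := hl.neBot
  have hfu : Tendsto (fun e => f (u * e)) l (𝓝 (f u)) :=
    (hf.tendsto u).comp (hl.tendsto_mul_left u)
  have hgv : Tendsto (fun e => g (e * v)) l (𝓝 (g v)) :=
    (hg.tendsto v).comp (hl.tendsto_mul_right v)
  exact tendsto_nhds_unique hfu (hgv.congr fun e => (h e).symm)

theorem eq_zero_of_forall_map_mul_eq_zero {R A E : Type*} [Semiring R] [TopologicalSpace A]
    [NonUnitalNonAssocSemiring A] [Module R A] [TopologicalSpace E] [T2Space E] [AddCommMonoid E]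
    [Module R E] {l : Filter A} (hl : l.IsApproximateUnit) {f : A →L[R] E}
    (hf : ∀ a b, f (a * b) = 0) : f = 0 := by
  ext a
  exact eq_of_forall_map_mul_eq hl (v := a) f.continuous (continuous_const (y := 0)) (hf a)

theorem IsBAI.isApproximateUnit {A : Type*} [NonUnitalNormedRing A] {S : BddNet A}
    (hS : IsBAI S) : (S.filter.map S.z).IsApproximateUnit where
  tendsto_mul_left a := tendsto_map'_iff.mpr (hS a).1
  tendsto_mul_right a := tendsto_map'_iff.mpr (hS a).2
  neBot := by
    let _ := S.dir
    have := S.ne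
    exact (atTop_neBot : (atTop : Filter S.ι).NeBot).map S.z

end ApproximateUnit

namespace BanachBimodule

variable {A X M : Type*} [NonUnitalNormedRing A] [NormedSpace ℂ A]
  [NormedAddCommGroup X] [NormedSpace ℂ X] [NormedAddCommGroup M] [NormedSpace ℂ M]

/-- `θ : A → M` is a homomorphism of `A`-bimodules, where `A` acts on itself by multiplication. -/
structure IsBimoduleMap (ρ : BanachBimodule A M) (θ : A →L[ℂ] M) : Prop where
  map_mul_left : ∀ a b, θ (a * b) = ρ.L a (θ b)
  map_mul_right : ∀ a b, θ (a * b) = ρ.R b (θ a)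

/-- The `A`-bimodule of pairs of operators on `X`, on which `a` acts by multiplication by the pair
`(σ.L a, σ.R a)`. The order of composition is reversed in the second component because `σ.R` is
anti-multiplicative. -/
noncomputable def operatorPairs (σ : BanachBimodule A X) :
    BanachBimodule A ((X →L[ℂ] X) × (X →L[ℂ] X)) where
  L := (prodMapL ℂ _ _ _ _).comp
    (((compL ℂ X X X).comp σ.L).prod ((compL ℂ X X X).flip.comp σ.R))
  R := (prodMapL ℂ _ _ _ _).comp
    (((compL ℂ X X X).flip.comp σ.L).prod ((compL ℂ X X X).comp σ.R))
  L_mul a b := by ext <;> simp [σ.L_mul, σ.R_mul]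
  R_mul a b := by ext <;> simp [σ.L_mul, σ.R_mul]
  LR_comm a b p := by ext <;> simp

theorem isBimoduleMap_operatorPairs (σ : BanachBimodule A X) :
    σ.operatorPairs.IsBimoduleMap (σ.L.prod σ.R) where
  map_mul_left a b := Prod.ext (σ.L_mul a b) (σ.R_mul a b)
  map_mul_right a b := Prod.ext (σ.L_mul a b) (σ.R_mul a b)

/-- The functional `w ↦ ψ (u · w · v)` on the bimodule `M`. -/
noncomputable def translate (ρ : BanachBimodule A M) (ψ : M →L[ℂ] ℂ) (u v : A) : M →L[ℂ] ℂ :=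
  ψ.comp ((ρ.L u).comp (ρ.R v))

@[fun_prop]
theorem continuous_translate (ρ : BanachBimodule A M) (ψ : M →L[ℂ] ℂ) :
    Continuous fun p : A × A => ρ.translate ψ p.1 p.2 := by
  unfold translate
  fun_prop

theorem translate_comp_L (ρ : BanachBimodule A M) (ψ : M →L[ℂ] ℂ) (u v b : A) :
    (ρ.translate ψ u v).comp (ρ.L b) = ρ.translate ψ (u * b) v := by
  ext w
  simp only [translate, comp_apply, ρ.LR_comm, ρ.L_mul]

theorem translate_comp_R (ρ : BanachBimodule A M) (ψ : M →L[ℂ] ℂ) (u v b : A) :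
    (ρ.translate ψ u v).comp (ρ.R b) = ρ.translate ψ u (b * v) := by
  ext w
  simp only [translate, comp_apply, ρ.R_mul]

theorem IsBimoduleMap.translate_apply {ρ : BanachBimodule A M} {θ : A →L[ℂ] M}
    (hθ : ρ.IsBimoduleMap θ) (ψ : M →L[ℂ] ℂ) (u v b : A) :
    ρ.translate ψ u v (θ b) = ψ (θ (u * b * v)) := by
  simp only [translate, comp_apply, hθ.map_mul_right (u * b) v, hθ.map_mul_left u b, ρ.LR_comm]

end BanachBimodule

theorem IsDualDerivation.eq_zero_of_actions_eq_zero {A X : Type*} [NonUnitalNormedRing A]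
    [NormedSpace ℂ A] [NormedAddCommGroup X] [NormedSpace ℂ X] {σ : BanachBimodule A X}
    {D : A →L[ℂ] X →L[ℂ] ℂ} (hD : IsDualDerivation σ D) {l : Filter A}
    (hl : l.IsApproximateUnit) (hL : σ.L = 0) (hR : σ.R = 0) : D = 0 :=
  eq_zero_of_forall_map_mul_eq_zero hl fun a b => by
    ext x
    simp [hD a b x, hL, hR]

namespace IsProjTensorProduct

variable {A B T : Type*} [NonUnitalNormedRing A] [NormedSpace ℂ A]
  [NonUnitalNormedRing B] [NormedSpace ℂ B]
  [NonUnitalNormedRing T] [NormedSpace ℂ T] [CompleteSpace T]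

section UniversalProperty

variable (P : IsProjTensorProduct A B T)

/-- The continuous linear map on `A ⊗̂ B` induced by a continuous bilinear map `φ`, chosen from
the existence statement `P.lift`. -/
noncomputable def linearize {E : Type} [NormedAddCommGroup E] [NormedSpace ℂ E] [CompleteSpace E]
    (φ : A →L[ℂ] B →L[ℂ] E) : T →L[ℂ] E :=
  (P.lift E _ _ inferInstance φ).choose

@[simp]
theorem linearize_ι {E : Type} [NormedAddCommGroup E] [NormedSpace ℂ E] [CompleteSpace E]
    (φ : A →L[ℂ] B →L[ℂ] E) (a : A) (b : B) : P.linearize φ (P.ι a b) = φ a b :=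
  (P.lift E _ _ inferInstance φ).choose_spec.1 a b

variable {E : Type*} [NormedAddCommGroup E] [NormedSpace ℂ E]

theorem ext {f g : T →L[ℂ] E} (h : ∀ a b, f (P.ι a b) = g (P.ι a b)) : f = g :=
  ContinuousLinearMap.ext_on P.dense_span (Set.forall_mem_range.mpr fun p => h p.1 p.2)

theorem ext₂ {f g : T →L[ℂ] T →L[ℂ] E}
    (h : ∀ a b c d, f (P.ι a b) (P.ι c d) = g (P.ι a b) (P.ι c d)) : f = g :=
  P.ext fun a b => P.ext fun c d => h a b c d

theorem map_mul_eq [IsScalarTower ℂ T T] [SMulCommClass ℂ T T]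
    {f : T →L[ℂ] E} {β : T →L[ℂ] T →L[ℂ] E}
    (h : ∀ a b c d, f (P.ι (a * c) (b * d)) = β (P.ι a b) (P.ι c d)) (s t : T) :
    f (s * t) = β s t := by
  have : (compL ℂ T T E f).comp (mul ℂ T) = β := P.ext₂ fun a b c d => by
    simp [P.ι_mul, h]
  exact congr($this s t)

end UniversalProperty

variable {X M : Type} [NormedAddCommGroup X] [NormedSpace ℂ X]
  [NormedAddCommGroup M] [NormedSpace ℂ M]

/-- The map `D ⊗ θ` on `A ⊗̂ B`, given by `(D ⊗ θ) (a ⊗ b) y = D a (y (θ b))`. -/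
noncomputable def tensorDerivation (P : IsProjTensorProduct A B T) (D : A →L[ℂ] X →L[ℂ] ℂ)
    (θ : B →L[ℂ] M) : T →L[ℂ] (M →L[ℂ] X) →L[ℂ] ℂ :=
  P.linearize (E := (M →L[ℂ] X) →L[ℂ] ℂ)
    (pointwiseComp D ((ContinuousLinearMap.apply ℂ X).comp θ))

@[simp]
theorem tensorDerivation_ι (P : IsProjTensorProduct A B T) (D : A →L[ℂ] X →L[ℂ] ℂ)
    (θ : B →L[ℂ] M) (a : A) (b : B) (y : M →L[ℂ] X) :
    P.tensorDerivation D θ (P.ι a b) y = D a (y (θ b)) :=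
  congr($(P.linearize_ι (E := (M →L[ℂ] X) →L[ℂ] ℂ)
    (pointwiseComp D ((ContinuousLinearMap.apply ℂ X).comp θ)) a b) y)

variable [CompleteSpace X]

/-- The action of `A ⊗̂ B` on `M →L[ℂ] X` in which `a ⊗ b` sends `y` to `p a ∘ y ∘ q b`. -/
noncomputable def tensorAction (P : IsProjTensorProduct A B T) (p : A →L[ℂ] X →L[ℂ] X)
    (q : B →L[ℂ] M →L[ℂ] M) : T →L[ℂ] (M →L[ℂ] X) →L[ℂ] (M →L[ℂ] X) :=
  P.linearize (E := (M →L[ℂ] X) →L[ℂ] (M →L[ℂ] X)) (sandwich p q)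

@[simp]
theorem tensorAction_ι (P : IsProjTensorProduct A B T) (p : A →L[ℂ] X →L[ℂ] X)
    (q : B →L[ℂ] M →L[ℂ] M) (a : A) (b : B) (y : M →L[ℂ] X) :
    P.tensorAction p q (P.ι a b) y = (p a).comp (y.comp (q b)) :=
  congr($(P.linearize_ι (E := (M →L[ℂ] X) →L[ℂ] (M →L[ℂ] X)) (sandwich p q) a b) y)

variable [IsScalarTower ℂ T T] [SMulCommClass ℂ T T]

/-- The `A ⊗̂ B`-bimodule of operators `M → X`, with actions `(a ⊗ b) · y = a · y(· b)` and
`y · (a ⊗ b) = y(b ·) · a`. It plays the role of the tensor product of the `A`-bimodule `X` with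
the dual of the `B`-bimodule `M`. -/
noncomputable def operatorBimodule (P : IsProjTensorProduct A B T) (σ : BanachBimodule A X)
    (ρ : BanachBimodule B M) : BanachBimodule T (M →L[ℂ] X) where
  L := P.tensorAction σ.L ρ.R
  R := P.tensorAction σ.R ρ.L
  L_mul := P.map_mul_eq (E := (M →L[ℂ] X) →L[ℂ] (M →L[ℂ] X))
    (β := pointwiseComp (P.tensorAction σ.L ρ.R) (P.tensorAction σ.L ρ.R))
    fun a b c d => by ext y w; simp [σ.L_mul, ρ.R_mul]
  R_mul := P.map_mul_eq (E := (M →L[ℂ] X) →L[ℂ] (M →L[ℂ] X))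
    (β := (pointwiseComp (P.tensorAction σ.R ρ.L) (P.tensorAction σ.R ρ.L)).flip)
    fun a b c d => by ext y w; simp [σ.R_mul, ρ.L_mul]
  LR_comm s t y := by
    have : (pointwiseComp (P.tensorAction σ.R ρ.L) (P.tensorAction σ.L ρ.R)).flip =
        pointwiseComp (P.tensorAction σ.L ρ.R) (P.tensorAction σ.R ρ.L) :=
      P.ext₂ (E := (M →L[ℂ] X) →L[ℂ] (M →L[ℂ] X)) fun a b c d => by
        ext y w; simp [σ.LR_comm, ρ.LR_comm]
    exact congr($this s t y)

theorem isDualDerivation_tensorDerivation (P : IsProjTensorProduct A B T)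
    {σ : BanachBimodule A X} {D : A →L[ℂ] X →L[ℂ] ℂ} (hD : IsDualDerivation σ D)
    {ρ : BanachBimodule B M} {θ : B →L[ℂ] M} (hθ : ρ.IsBimoduleMap θ) :
    IsDualDerivation (P.operatorBimodule σ ρ) (P.tensorDerivation D θ) := by
  let β : T →L[ℂ] T →L[ℂ] (M →L[ℂ] X) →L[ℂ] ℂ :=
    (pointwiseComp (P.tensorDerivation D θ) (P.tensorAction σ.R ρ.L)).flip +
      pointwiseComp (P.tensorDerivation D θ) (P.tensorAction σ.L ρ.R)
  have hβ : ∀ s t, P.tensorDerivation D θ (s * t) = β s t :=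
    P.map_mul_eq (E := (M →L[ℂ] X) →L[ℂ] ℂ) fun a b c d => by
      ext y
      simp [β, hD a c, ← hθ.map_mul_left, ← hθ.map_mul_right]
  exact fun s t y => congr($(hβ s t) y)

theorem operatorBimodule_R_smulRight (P : IsProjTensorProduct A B T) (σ : BanachBimodule A X)
    (ρ : BanachBimodule B M) (a : A) (b : B) (n : M →L[ℂ] ℂ) (x : X) :
    (P.operatorBimodule σ ρ).R (P.ι a b) (n.smulRight x) =
      (n.comp (ρ.L b)).smulRight (σ.R a x) := by
  ext w
  simp [operatorBimodule]

theorem operatorBimodule_L_smulRight (P : IsProjTensorProduct A B T) (σ : BanachBimodule A X)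
    (ρ : BanachBimodule B M) (a : A) (b : B) (n : M →L[ℂ] ℂ) (x : X) :
    (P.operatorBimodule σ ρ).L (P.ι a b) (n.smulRight x) =
      (n.comp (ρ.R b)).smulRight (σ.L a x) := by
  ext w
  simp [operatorBimodule]

theorem isInnerDualDerivation_of_tensorDerivation (P : IsProjTensorProduct A B T)
    {σ : BanachBimodule A X} {D : A →L[ℂ] X →L[ℂ] ℂ} {ρ : BanachBimodule B M} {θ : B →L[ℂ] M}
    (hθ : ρ.IsBimoduleMap θ) (hθ₀ : θ ≠ 0) {l : Filter B} (hl : l.IsApproximateUnit)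
    (hDθ : IsInnerDualDerivation (P.operatorBimodule σ ρ) (P.tensorDerivation D θ)) :
    IsInnerDualDerivation σ D := by
  obtain ⟨F, hF⟩ := hDθ
  obtain ⟨u, v, huv⟩ : ∃ u v, θ (u * v) ≠ 0 := by
    contrapose! hθ₀
    exact eq_zero_of_forall_map_mul_eq_zero hl hθ₀
  obtain ⟨ψ, hψ⟩ := SeparatingDual.exists_eq_one (R := ℂ) huv
  refine ⟨F.comp (smulRightL ℂ M X (ρ.translate ψ u v)), fun a x => ?_⟩
  have tensor_eq (b : B) : D a x * ψ (θ (u * b * v)) =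
      F ((ρ.translate ψ (u * b) v).smulRight (σ.R a x)) -
        F ((ρ.translate ψ u (b * v)).smulRight (σ.L a x)) := by
    have := hF (P.ι a b) ((ρ.translate ψ u v).smulRight x)
    rw [operatorBimodule_R_smulRight, operatorBimodule_L_smulRight, ρ.translate_comp_L,
      ρ.translate_comp_R, tensorDerivation_ι, smulRight_apply, hθ.translate_apply, map_smul,
      smul_eq_mul, mul_comm] at this
    exact this
  have limit_eq := eq_of_forall_map_mul_eq hl
    (f := fun b => F ((ρ.translate ψ b v).smulRight (σ.R a x)) - D a x * ψ (θ (b * v)))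
    (g := fun b => F ((ρ.translate ψ u b).smulRight (σ.L a x)))
    (by fun_prop) (by fun_prop) (u := u) (v := v) fun b => by rw [tensor_eq b, sub_sub_cancel]
  rw [hψ, mul_one] at limit_eq
  simp [← limit_eq]

end IsProjTensorProduct

theorem stmt8_general {A T : Type*} [NonUnitalNormedRing A] [NormedSpace ℂ A]
    [NonUnitalNormedRing T] [NormedSpace ℂ T] [IsScalarTower ℂ T T] [SMulCommClass ℂ T T]
    [CompleteSpace T] (P : IsProjTensorProduct A A T) {l : Filter A} (hl : l.IsApproximateUnit)
    (hT : Amenable T) : Amenable A := by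
  intro X _ _ _ σ D hD
  by_cases hσ : σ.L.prod σ.R = 0
  · have hL : σ.L = 0 := ContinuousLinearMap.ext fun a => congr(($hσ a).1)
    have hR : σ.R = 0 := ContinuousLinearMap.ext fun a => congr(($hσ a).2)
    exact ⟨0, by simp [hD.eq_zero_of_actions_eq_zero hl hL hR]⟩
  · have hθ := σ.isBimoduleMap_operatorPairs
    exact P.isInnerDualDerivation_of_tensorDerivation hθ hσ hl
      (hT _ _ _ inferInstance _ _ (P.isDualDerivation_tensorDerivation hD hθ))

/-- if `A` has a bounded approximate identity and `A ⊗̂ A` is amenable,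
then `A` is amenable. -/
theorem stmt8 {A T : Type*} [NonUnitalNormedRing A] [NormedSpace ℂ A] [IsScalarTower ℂ A A] [SMulCommClass ℂ A A] [CompleteSpace A] [NonUnitalNormedRing T] [NormedSpace ℂ T] [IsScalarTower ℂ T T] [SMulCommClass ℂ T T] [CompleteSpace T]
    (P : IsProjTensorProduct A A T)
    (hA : HasBAI A) (hT : Amenable T) : Amenable A := by
  obtain ⟨_, hS⟩ := hA
  exact stmt8_general P hS.isApproximateUnit hT
end
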